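/- Let k ≥ 3 and n ≥ 3 be odd integers and set d = (1 − 2k^n)^n. Then d + 1 = 1 − a^n with a = 2k^n − 1 ≥ 53, and n divides the class number of the imaginary quadratic field ℚ(√(d+1)). -/

import Mathlib

open IntermediateField NumberField

/-- The quadratic field `ℚ(√D)`, realized inside `ℂ` by adjoining the principal
square root of `D`. -/
noncomputable def quadField (D : ℤ) : IntermediateField ℚ ℂ :=
  ℚ⟮(D : ℂ) ^ ((1 : ℂ) / 2)⟯

/-- The class number of the quadratic field `ℚ(√D)`. -/
noncomputable def quadClassNumber (D : ℤ) : ℕ :=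
  Nat.card (ClassGroup (𝓞 (quadField D)))

/-!
Write `1 - a ^ n = 4 * δ ^ 2` with `a ≡ 1 mod 4` and `α = 1 + 2 * δ`. Then `α` is coprime to its
conjugate and has norm `a ^ n`, so the ideal `(α)` is an `n`-th power `I ^ n`, and the class of `I`
has order exactly `n` unless `α` is, for some prime `p ∣ n`, associated to a `p`-th power.

Suppose it is. As `α ≡ 1 mod 2`, the unit involved is itself a `p`-th power, so `α = x ^ p`, where
`x` has norm `N ≡ 1 mod 4`, `N > 1`, and `x ^ p` has trace `2`. The trace `P` of `x` is even:
otherwise `x ^ 3 ≡ 1 mod 2`, which together with `x ^ p ≡ 1 mod 2` forces `x ≡ 1 mod 2` if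
`p ≠ 3`, while for `p = 3` the trace `P * (P ^ 2 - 3 * N)` of `x ^ 3` cannot equal `2`. Moreover
`P ∣ 2`, so `P = ±2`.

With `p = 2 * s + 1` and `y` the conjugate of `x`, the identity
`x ^ p + y ^ p - (x + y) * (x * y) ^ s = (x ^ s - y ^ s) * (x ^ (s + 1) - y ^ (s + 1))`
shows that `2 - P * N ^ s` is divisible by `(x - y) ^ 2 = 4 * (1 - N)` times the largest power of
`2` dividing `s`. For `P = 2` this exceeds the power of `2` in `2 * (1 - N ^ s)` allowed by
lifting-the-exponent; for `P = -2` it fails modulo `8`.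
-/

theorem sub_mul_two_pow_dvd_pow_sub_pow {R : Type*} [CommRing R] {x y : R} (hxy : 2 ∣ x - y)
    {e s : ℕ} (hs : 2 ^ e ∣ s) : (x - y) * 2 ^ e ∣ x ^ s - y ^ s := by
  obtain ⟨j, rfl⟩ := hs
  induction e with
  | zero => simpa using sub_dvd_pow_sub_pow x y j
  | succ e ih =>
    have two_dvd_sum : 2 ∣ x ^ (2 ^ e * j) + y ^ (2 ^ e * j) := by
      have h := (hxy.trans (sub_dvd_pow_sub_pow x y (2 ^ e * j))).add
        (dvd_mul_right 2 (y ^ (2 ^ e * j)))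
      convert h using 1
      ring
    convert mul_dvd_mul ih two_dvd_sum using 1 <;> ring

theorem sub_sq_mul_two_pow_dvd_pow_add_pow_sub {R : Type*} [CommRing R] {x y : R}
    (hxy : 2 ∣ x - y) {e s : ℕ} (hs : 2 ^ e ∣ s) :
    (x - y) ^ 2 * 2 ^ e ∣ x ^ (2 * s + 1) + y ^ (2 * s + 1) - (x + y) * (x * y) ^ s := by
  convert mul_dvd_mul (sub_mul_two_pow_dvd_pow_sub_pow hxy hs)
    (sub_dvd_pow_sub_pow x y (s + 1)) using 1 <;> ring

theorem exists_two_pow_dvd_and_not_dvd_pow_sub_one {N : ℤ} (hN : 4 ∣ N - 1) (hN1 : N ≠ 1)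
    {s : ℕ} (hs : s ≠ 0) : ∃ e, 2 ^ e ∣ s ∧ ¬ (N - 1) * 2 ^ (e + 1) ∣ N ^ s - 1 := by
  have hfin : FiniteMultiplicity (2 : ℤ) (N - 1) :=
    Int.finiteMultiplicity_iff.2 ⟨by decide, sub_ne_zero.2 hN1⟩
  have hsfin : FiniteMultiplicity (2 : ℤ) s :=
    Int.finiteMultiplicity_iff.2 ⟨by decide, by exact_mod_cast hs⟩
  have lifting := Int.two_pow_sub_pow' s hN (by omega)
  refine ⟨multiplicity 2 (s : ℤ), by exact_mod_cast pow_multiplicity_dvd 2 (s : ℤ), fun hdvd ↦ ?_⟩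
  have hle := emultiplicity_le_emultiplicity_of_dvd_right (a := 2) hdvd
  rw [one_pow, hfin.emultiplicity_eq_multiplicity, hsfin.emultiplicity_eq_multiplicity] at lifting
  rw [lifting, emultiplicity_mul Int.prime_two, hfin.emultiplicity_eq_multiplicity,
    emultiplicity_pow_self_of_prime Int.prime_two] at hle
  norm_cast at hle
  omega

theorem dvd_sub_one_of_dvd_pow_sub_one {R : Type*} [CommRing R] {c x : R} {i j : ℕ}
    (hij : i.Coprime j) (hi : c ∣ x ^ i - 1) (hj : c ∣ x ^ j - 1) : c ∣ x - 1 := by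
  simp only [← Ideal.Quotient.eq_zero_iff_dvd, map_sub, map_pow, map_one, sub_eq_zero] at *
  simpa [hij.gcd_eq_one] using pow_gcd_eq_one.2 ⟨hi, hj⟩

section StarRing

variable {R : Type*} [CommRing R] [StarRing R] {x : R} {P N : ℤ}

theorem two_dvd_star_sub_one (hx : 2 ∣ x - 1) : 2 ∣ star x - 1 := by
  obtain ⟨y, hy⟩ := hx
  exact ⟨star y, by simpa using congrArg star hy⟩

theorem two_dvd_add_star_of_two_dvd_sub_one (hx : 2 ∣ x - 1) : 2 ∣ x + star x := by
  convert (hx.add (two_dvd_star_sub_one hx)).add (dvd_refl 2) using 1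
  ring

theorem sq_eq_trace_mul_sub_norm (hP : x + star x = P) (hN : x * star x = N) :
    x ^ 2 = P * x - N := by
  rw [← hP, ← hN]
  ring

theorem two_dvd_sq_sub_one (hP : x + star x = P) (hN : x * star x = N)
    (hPe : Even P) (hNo : Odd N) : 2 ∣ x ^ 2 - 1 := by
  obtain ⟨⟨p, rfl⟩, ⟨q, rfl⟩⟩ := And.intro hPe hNo
  refine ⟨p * x - q - 1, ?_⟩
  rw [sq_eq_trace_mul_sub_norm hP hN]
  push_cast
  ring

theorem two_dvd_pow_three_sub_one (hP : x + star x = P) (hN : x * star x = N)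
    (hPo : Odd P) (hNo : Odd N) : 2 ∣ x ^ 3 - 1 := by
  obtain ⟨⟨p, rfl⟩, ⟨q, rfl⟩⟩ := And.intro hPo hNo
  refine ⟨(x - 1) * (p * x + x - q), ?_⟩
  have hsq := sq_eq_trace_mul_sub_norm hP hN
  push_cast at hsq
  linear_combination (x - 1) * hsq

end StarRing

/-- Commutative star rings in which every element has a trace `P` and a norm `N` in `ℤ` whose
characteristic polynomial `X ^ 2 - P * X + N` has nonpositive discriminant. The orders of imaginary
quadratic fields are of this kind, with complex conjugation as `star`. -/
class IsImaginaryQuadratic (R : Type*) [CommRing R] [StarRing R] : Prop where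
  exists_trace_norm (x : R) : ∃ P N : ℤ, x + star x = P ∧ x * star x = N ∧ P ^ 2 ≤ 4 * N

namespace IsImaginaryQuadratic

variable {R : Type*} [CommRing R] [StarRing R] [IsImaginaryQuadratic R]

theorem two_dvd_pow_six_sub_one {x : R} {N : ℤ} (hN : x * star x = N) (hNo : Odd N) :
    2 ∣ x ^ 6 - 1 := by
  obtain ⟨P, -, hP, -⟩ := exists_trace_norm x
  rcases Int.even_or_odd P with hPe | hPo
  · rw [pow_mul x 2 3]
    exact (two_dvd_sq_sub_one hP hN hPe hNo).trans (sub_one_dvd_pow_sub_one _ 3)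
  · rw [pow_mul x 3 2]
    exact (two_dvd_pow_three_sub_one hP hN hPo hNo).trans (sub_one_dvd_pow_sub_one _ 2)

variable [CharZero R]

theorem intCast_dvd_intCast {m k : ℤ} : (m : R) ∣ k ↔ m ∣ k := by
  -- Taking norms in `k = m * x` gives `m ^ 2 ∣ k ^ 2`.
  refine ⟨fun ⟨x, hx⟩ ↦ ?_, Int.cast_dvd_cast _ _⟩
  obtain ⟨-, N, -, hN, -⟩ := exists_trace_norm x
  have hx' : (k : R) = m * star x := by simpa using congrArg star hx
  have hsq : k ^ 2 = m ^ 2 * N := by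
    have : (k : R) ^ 2 = m ^ 2 * N := by
      rw [← hN, sq]
      nth_rewrite 1 [hx]
      rw [hx']
      ring
    exact_mod_cast this
  exact (Int.pow_dvd_pow_iff two_ne_zero).1 ⟨N, hsq⟩

theorem two_dvd_intCast_iff_even {k : ℤ} : (2 : R) ∣ k ↔ Even k := by
  rw [even_iff_two_dvd, ← intCast_dvd_intCast (R := R), Int.cast_ofNat]

theorem two_dvd_add_star_of_two_dvd_sq_sub_one {x : R} (hx : 2 ∣ x ^ 2 - 1) :
    2 ∣ x + star x := by
  obtain ⟨P, -, hP, -⟩ := exists_trace_norm x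
  have hsq : 2 ∣ (x + star x) ^ 2 := by
    convert (two_dvd_add_star_of_two_dvd_sub_one hx).add (dvd_mul_right 2 (x * star x)) using 1
    rw [star_pow]
    ring
  rw [hP, ← Int.cast_pow, two_dvd_intCast_iff_even, Int.even_pow' two_ne_zero] at hsq
  rwa [hP, two_dvd_intCast_iff_even]

theorem unit_mul_star_eq_one (u : Rˣ) : (u : R) * star (u : R) = 1 := by
  obtain ⟨P, N, -, hN, hPN⟩ := exists_trace_norm (u : R)
  obtain ⟨-, M, -, hM, -⟩ := exists_trace_norm ((u⁻¹ : Rˣ) : R)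
  have hNM : N * M = 1 := by
    have : (N : R) * M = 1 := by
      rw [← hN, ← hM, mul_mul_mul_comm, ← star_mul', Units.mul_inv, star_one, one_mul]
    exact_mod_cast this
  have hN0 : 0 ≤ N := by nlinarith [sq_nonneg P]
  rw [hN, Int.eq_one_of_mul_eq_one_right hN0 hNM, Int.cast_one]

theorem exists_unit_trace (u : Rˣ) : ∃ T : ℤ, (u : R) + star (u : R) = T ∧ |T| ≤ 2 := by
  obtain ⟨T, N, hT, hN, hTN⟩ := exists_trace_norm (u : R)
  have hN1 : N = 1 := by exact_mod_cast hN.symm.trans (unit_mul_star_eq_one u)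
  exact ⟨T, hT, abs_le_of_sq_le_sq (by omega) two_pos.le⟩

theorem unit_pow_four_eq_one [IsDomain R] {u : Rˣ} (hu : 2 ∣ (u : R) + star (u : R)) :
    u ^ 4 = 1 := by
  obtain ⟨T, hT, hTabs⟩ := exists_unit_trace u
  have hsq := sq_eq_trace_mul_sub_norm (N := 1) hT (by simpa using unit_mul_star_eq_one u)
  rw [hT, two_dvd_intCast_iff_even] at hu
  obtain rfl | rfl | rfl : T = 0 ∨ T = 2 ∨ T = -2 := by
    obtain ⟨q, rfl⟩ := hu
    rw [abs_le] at hTabs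
    omega
  all_goals push_cast at hsq; ext; push_cast
  · linear_combination ((u : R) ^ 2 - 1) * hsq
  · have : (u : R) = 1 := sub_eq_zero.1 (pow_eq_zero_iff two_ne_zero |>.1 (by
      linear_combination hsq : ((u : R) - 1) ^ 2 = 0))
    simp [this]
  · have : (u : R) = -1 := eq_neg_of_add_eq_zero_left (pow_eq_zero_iff two_ne_zero |>.1 (by
      linear_combination hsq : ((u : R) + 1) ^ 2 = 0))
    simp [this, Even.neg_one_pow (by decide : Even 4)]

theorem unit_pow_twelve_eq_one [IsDomain R] (u : Rˣ) : u ^ 12 = 1 := by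
  obtain ⟨T, hT, hTabs⟩ := exists_unit_trace u
  by_cases hTe : Even T
  · rw [pow_mul u 4 3, unit_pow_four_eq_one (by rwa [hT, two_dvd_intCast_iff_even]), one_pow]
  have hsq := sq_eq_trace_mul_sub_norm (N := 1) hT (by simpa using unit_mul_star_eq_one u)
  suffices u ^ 6 = 1 by rw [pow_mul u 6 2, this, one_pow]
  obtain rfl | rfl : T = 1 ∨ T = -1 := by
    rw [Int.not_even_iff] at hTe
    rw [abs_le] at hTabs
    omega
  all_goals push_cast at hsq; ext; push_cast
  · linear_combination ((u : R) ^ 4 + u ^ 3 - u - 1) * hsq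
  · linear_combination ((u : R) ^ 4 - u ^ 3 + u - 1) * hsq

theorem exists_unit_pow_eq [IsDomain R] {α β : R} {u : Rˣ} {t : ℕ} {N : ℤ} (ht : Odd t)
    (hα : 2 ∣ α - 1) (hN : β * star β = N) (hNo : Odd N) (hβ : β ^ t * u = α) :
    ∃ v : Rˣ, v ^ t = u := by
  suffices t.Coprime (orderOf u) by
    obtain ⟨m, hm⟩ := exists_pow_eq_self_of_coprime this
    exact ⟨u ^ m, by rwa [pow_right_comm]⟩
  have t_coprime_four : t.Coprime 4 := ht.coprime_two_right.pow_right 2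
  by_cases h3 : 3 ∣ t
  · obtain ⟨j, rfl⟩ := h3
    refine t_coprime_four.coprime_dvd_right (orderOf_dvd_of_pow_eq_one (unit_pow_four_eq_one
      (two_dvd_add_star_of_two_dvd_sq_sub_one ?_)))
    have hβpow : 2 ∣ β ^ (6 * j) - 1 := by
      rw [pow_mul]
      exact (two_dvd_pow_six_sub_one hN hNo).trans (sub_one_dvd_pow_sub_one _ j)
    convert (hα.mul_right (α + 1)).sub (hβpow.mul_right ((u : R) ^ 2)) using 1
    rw [← hβ]
    ring
  · have : t.Coprime 3 := ((Nat.Prime.coprime_iff_not_dvd Nat.prime_three).2 h3).symm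
    exact (this.mul_right t_coprime_four).coprime_dvd_right
      (orderOf_dvd_of_pow_eq_one (unit_pow_twelve_eq_one u))

theorem not_odd_trace_of_pow_trace_eq_two {x : R} {P N : ℤ} {t : ℕ} (hP : x + star x = P)
    (hN : x * star x = N) (hNo : Odd N) (hN1 : 1 < N) (ht : Odd t) (hx : 2 ∣ x ^ t - 1)
    (htr : x ^ t + star x ^ t = 2) : ¬ Odd P := by
  intro hPo
  by_cases h3 : 3 ∣ t
  · obtain ⟨j, rfl⟩ := h3
    have cubes_dvd : (P * (P ^ 2 - 3 * N) : ℤ) ∣ 2 := by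
      rw [← intCast_dvd_intCast (R := R)]
      convert Odd.add_dvd_pow_add_pow (x ^ 3) (star x ^ 3) (Nat.odd_mul.1 ht).2 using 1
      · push_cast
        rw [← hP, ← hN]
        ring
      · rw [← pow_mul, ← pow_mul, htr, Int.cast_ofNat]
    have hP_dvd := (dvd_mul_right _ _).trans cubes_dvd
    have hle := Int.le_of_dvd two_pos (neg_dvd.2 ((dvd_mul_left _ _).trans cubes_dvd))
    have hPabs : |P| ≤ 2 := Int.le_of_dvd two_pos ((abs_dvd _ _).2 hP_dvd)
    rw [abs_le] at hPabs
    obtain rfl | rfl : P = 1 ∨ P = -1 := by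
      rw [Int.odd_iff] at hPo
      omega
    all_goals omega
  · have hx1 : 2 ∣ x - 1 := dvd_sub_one_of_dvd_pow_sub_one
      ((Nat.Prime.coprime_iff_not_dvd Nat.prime_three).2 h3)
      (two_dvd_pow_three_sub_one hP hN hPo hNo) hx
    have hPe := two_dvd_add_star_of_two_dvd_sub_one hx1
    rw [hP, two_dvd_intCast_iff_even] at hPe
    exact Int.not_even_iff_odd.2 hPo hPe

theorem not_even_trace_of_pow_trace_eq_two {x : R} {P N : ℤ} {s : ℕ} (hP : x + star x = P)
    (hN : x * star x = N) (hN4 : 4 ∣ N - 1) (hN1 : N ≠ 1) (hs : s ≠ 0)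
    (htr : x ^ (2 * s + 1) + star x ^ (2 * s + 1) = 2) : ¬ Even P := by
  intro hPe
  have hPdvd : P ∣ 2 := by
    rw [← intCast_dvd_intCast (R := R), ← hP, Int.cast_ofNat, ← htr]
    exact Odd.add_dvd_pow_add_pow _ _ (odd_two_mul_add_one s)
  have two_dvd_sub : 2 ∣ x - star x := by
    rw [← two_dvd_intCast_iff_even (R := R), ← hP] at hPe
    convert hPe.sub (dvd_mul_right 2 (star x)) using 1
    ring
  have disc_dvd {e : ℕ} (he : 2 ^ e ∣ s) : (P ^ 2 - 4 * N) * 2 ^ e ∣ 2 - P * N ^ s := by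
    rw [← intCast_dvd_intCast (R := R)]
    convert sub_sq_mul_two_pow_dvd_pow_add_pow_sub two_dvd_sub he using 1
    · push_cast
      rw [← hP, ← hN]
      ring
    · push_cast
      rw [htr, hP, hN]
  obtain rfl | rfl : P = 2 ∨ P = -2 := by
    have hPabs : |P| ≤ 2 := Int.le_of_dvd two_pos ((abs_dvd _ _).2 hPdvd)
    rw [abs_le] at hPabs
    have : P ≠ 0 := by rintro rfl; simp at hPdvd
    obtain ⟨q, rfl⟩ := hPe
    omega
  · obtain ⟨e, he, hnot⟩ := exists_two_pow_dvd_and_not_dvd_pow_sub_one hN4 hN1 hs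
    refine hnot ((mul_dvd_mul_iff_left (two_ne_zero : (2 : ℤ) ≠ 0)).1 ?_)
    convert (disc_dvd he).neg_left.neg_right using 1 <;> ring
  · have four_dvd : 4 ∣ N ^ s - 1 := hN4.trans (sub_one_dvd_pow_sub_one N s)
    have eight_dvd : 8 ∣ 2 - -2 * N ^ s :=
      (show 8 ∣ (-2) ^ 2 - 4 * N by omega).trans (by simpa using disc_dvd (e := 0) (by simp))
    omega

theorem not_associated_pow [IsDomain R] {α β : R} {M : ℤ} {t : ℕ} (ht : Odd t) (ht1 : t ≠ 1)
    (hM4 : 4 ∣ M - 1) (hM1 : 1 < M) (hα : 2 ∣ α - 1) (htr : α + star α = 2)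
    (hnorm : α * star α = (M : R) ^ t) : ¬ Associated (β ^ t) α := by
  rintro ⟨u, hu⟩
  have norm_eq {x : R} {w : Rˣ} (hx : x ^ t * w = α) : x * star x = M := by
    obtain ⟨-, N, -, hN, -⟩ := exists_trace_norm x
    have : (N : R) ^ t = M ^ t := by
      rw [← hnorm, ← hx, star_mul', mul_mul_mul_comm, unit_mul_star_eq_one, star_pow, ← mul_pow, hN,
        mul_one]
    rw [hN, ht.strictMono_pow.injective (by exact_mod_cast this : N ^ t = M ^ t)]
  have hMo : Odd M := by
    rw [Int.odd_iff]
    omega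
  obtain ⟨v, rfl⟩ := exists_unit_pow_eq ht hα (norm_eq hu) hMo hu
  have hx : (β * v) ^ t = α := by rw [mul_pow, ← hu, Units.val_pow_eq_pow_val]
  have hxnorm := norm_eq (w := 1) (by simpa using hx)
  obtain ⟨P, -, hP, -⟩ := exists_trace_norm (β * v)
  have hxtr : (β * v) ^ t + star (β * v) ^ t = 2 := by rw [← star_pow, hx, htr]
  rcases Int.even_or_odd P with hPe | hPo
  · obtain ⟨s, rfl⟩ := ht
    exact not_even_trace_of_pow_trace_eq_two hP hxnorm hM4 hM1.ne' (by omega) hxtr hPe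
  · exact not_odd_trace_of_pow_trace_eq_two hP hxnorm hMo hM1 ht (by rwa [hx]) hxtr hPo

end IsImaginaryQuadratic

theorem dvd_card_classGroup_of_not_associated_pow {R : Type*} [CommRing R] [IsDedekindDomain R]
    {α α' a : R} {n : ℕ} (hn : n ≠ 0) (hα : α ≠ 0) (hcop : IsCoprime α α')
    (hmul : α * α' = a ^ n) (hpow : ∀ p : ℕ, p.Prime → p ∣ n → ∀ β : R, ¬ Associated (β ^ p) α) :
    n ∣ Nat.card (ClassGroup R) := by
  obtain ⟨I, hI⟩ := exists_eq_pow_of_mul_eq_pow_of_coprime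
    ((Ideal.isCoprime_span_singleton_iff α α').2 hcop)
    (by rw [Ideal.span_singleton_mul_span_singleton, hmul, ← Ideal.span_singleton_pow])
  have hI0 : I ∈ nonZeroDivisors (Ideal R) := mem_nonZeroDivisors_of_ne_zero fun hI0 ↦ hα <| by
    rwa [hI0, zero_pow hn, Ideal.zero_eq_bot, Ideal.span_singleton_eq_bot] at hI
  have pow_eq_one_iff (j : ℕ) : ClassGroup.mk0 ⟨I, hI0⟩ ^ j = 1 ↔ (I ^ j).IsPrincipal := by
    rw [← map_pow]
    exact ClassGroup.mk0_eq_one_iff _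
  suffices orderOf (ClassGroup.mk0 ⟨I, hI0⟩) = n from this ▸ orderOf_dvd_natCard _
  refine orderOf_eq_of_pow_and_pow_div_prime hn.bot_lt ((pow_eq_one_iff n).2 (hI ▸ ⟨α, rfl⟩)) ?_
  intro p hp hpn h
  obtain ⟨β, hβ⟩ := (pow_eq_one_iff _).1 h
  refine hpow p hp hpn β (Ideal.span_singleton_eq_span_singleton.1 ?_)
  rw [hI, ← Ideal.span_singleton_pow, ← Ideal.submodule_span_eq, ← hβ, ← pow_mul,
    Nat.div_mul_cancel hpn]

theorem IsImaginaryQuadratic.dvd_card_classGroup {R : Type*} [CommRing R] [IsDedekindDomain R]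
    [CharZero R] [StarRing R] [IsImaginaryQuadratic R] {a : ℤ} {n : ℕ} {δ : R} (hn : Odd n)
    (ha4 : 4 ∣ a - 1) (ha : 1 < a) (hδ : star δ = -δ) (hδsq : 4 * δ ^ 2 = 1 - (a : R) ^ n) :
    n ∣ Nat.card (ClassGroup R) := by
  have hstar : star (1 + 2 * δ) = 1 - 2 * δ := by
    rw [star_add, star_one, star_mul', star_ofNat, hδ]
    ring
  have hmul : (1 + 2 * δ) * (1 - 2 * δ) = (a : R) ^ n := by linear_combination -hδsq
  have hcop : IsCoprime (1 + 2 * δ) (1 - 2 * δ) := by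
    obtain ⟨q, hq⟩ := ha4.trans (sub_one_dvd_pow_sub_one a n)
    have hq' : (a : R) ^ n - 1 = 4 * q := by exact_mod_cast hq
    exact ⟨1 - 2 * δ - 2 * q, -2 * q, by linear_combination hmul + hq'⟩
  have hα : 1 + 2 * δ ≠ 0 := by
    refine left_ne_zero_of_mul (b := 1 - 2 * δ) ?_
    rw [hmul]
    exact pow_ne_zero n (by exact_mod_cast (zero_lt_one.trans ha).ne')
  refine dvd_card_classGroup_of_not_associated_pow hn.pos.ne' hα hcop hmul ?_
  rintro p hp ⟨m, rfl⟩ β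
  have hm : m ≠ 0 := right_ne_zero_of_mul hn.pos.ne'
  refine not_associated_pow (M := a ^ m) (Nat.odd_mul.1 hn).1 hp.ne_one
    (ha4.trans (sub_one_dvd_pow_sub_one a m)) (one_lt_pow₀ ha hm) ⟨δ, by ring⟩ ?_ ?_
  · rw [hstar]
    ring
  · rw [hstar, hmul, mul_comm, pow_mul, Int.cast_pow]

section ComplexQuadraticField

open ComplexConjugate

theorem conj_eq_neg_of_sq_eq_intCast {D : ℤ} {r : ℂ} (hD : D < 0) (hr : r ^ 2 = D) :
    conj r = -r := by
  refine (sq_eq_sq_iff_eq_or_eq_neg.1 (by rw [← map_pow, hr, map_intCast])).resolve_left ?_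
  intro hreal
  obtain ⟨x, rfl⟩ := Complex.conj_eq_iff_real.1 hreal
  have : x ^ 2 = D := by exact_mod_cast hr
  have : (D : ℝ) < 0 := by exact_mod_cast hD
  nlinarith [sq_nonneg x]

theorem exists_eq_add_mul_of_mem_adjoin_simple {F E : Type*} [Field F] [Field E] [Algebra F E]
    {r : E} {c : F} (hr : r ^ 2 = algebraMap F E c) {x : E} (hx : x ∈ F⟮r⟯) :
    ∃ p q : F, x = algebraMap F E p + algebraMap F E q * r := by
  have hint : IsIntegral F r := .of_pow two_pos (hr ▸ isIntegral_algebraMap)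
  rw [← IntermediateField.mem_toSubalgebra,
    adjoin_simple_toSubalgebra_of_isAlgebraic hint.isAlgebraic] at hx
  induction hx using Algebra.adjoin_induction with
  | mem x hx => exact ⟨0, 1, by simpa using hx⟩
  | algebraMap p => exact ⟨p, 0, by simp⟩
  | add x y _ _ hx hy =>
    obtain ⟨⟨p, q, rfl⟩, ⟨p', q', rfl⟩⟩ := And.intro hx hy
    exact ⟨p + p', q + q', by simp only [map_add]; ring⟩
  | mul x y _ _ hx hy =>
    obtain ⟨⟨p, q, rfl⟩, ⟨p', q', rfl⟩⟩ := And.intro hx hy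
    refine ⟨p * p' + q * q' * c, p * q' + q * p', ?_⟩
    simp only [map_add, map_mul]
    linear_combination algebraMap F E q * algebraMap F E q' * hr

theorem exists_intCast_eq_of_isIntegral_ratCast {F : Type*} [Field F] [CharZero F] {q : ℚ}
    (hq : IsIntegral ℤ (q : F)) : ∃ m : ℤ, (q : F) = m := by
  rw [← eq_ratCast (algebraMap ℚ F), isIntegral_algebraMap_iff (algebraMap ℚ F).injective] at hq
  obtain ⟨m, rfl⟩ := IsIntegrallyClosed.isIntegral_iff.1 hq
  exact ⟨m, by simp⟩

variable {K : IntermediateField ℚ ℂ}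

/-- Complex conjugation as the star operation on the ring of integers of a subfield of `ℂ` that is
stable under conjugation. -/
noncomputable abbrev conjStarRing (hK : ∀ x ∈ K, conj x ∈ K) : StarRing (𝓞 K) where
  star := RingOfIntegers.mapRingHom ((starRingEnd ℂ).restrict K K hK)
  star_involutive x := by
    ext
    exact Complex.conj_conj _
  star_mul x y := by rw [map_mul, mul_comm]
  star_add := map_add _

theorem isImaginaryQuadratic_ringOfIntegers (hK : ∀ x ∈ K, conj x ∈ K)
    (hreal : ∀ x ∈ K, conj x = x → ∃ q : ℚ, x = q) :
    letI := conjStarRing hK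
    IsImaginaryQuadratic (𝓞 K) := by
  let := conjStarRing hK
  have exists_intCast (y : 𝓞 K) (hy : star y = y) : ∃ m : ℤ, y = m := by
    have hint : IsIntegral ℤ (y : ℂ) := y.isIntegral_coe.map (K.val.restrictScalars ℤ)
    obtain ⟨q, hq⟩ := hreal y (y : K).2 (congrArg (fun z : 𝓞 K ↦ (z : ℂ)) hy)
    obtain ⟨m, hm⟩ := exists_intCast_eq_of_isIntegral_ratCast (hq ▸ hint)
    exact ⟨m, RingOfIntegers.ext (Subtype.ext (by simpa using hq.trans hm))⟩
  refine ⟨fun x ↦ ?_⟩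
  obtain ⟨P, hP⟩ := exists_intCast (x + star x) (by rw [star_add, star_star, add_comm])
  obtain ⟨N, hN⟩ := exists_intCast (x * star x) (by rw [star_mul', star_star, mul_comm])
  refine ⟨P, N, hP, hN, ?_⟩
  have hPc : (x : ℂ) + conj (x : ℂ) = P := by
    exact (congrArg (fun z : 𝓞 K ↦ (z : ℂ)) hP).trans (by simp)
  have hNc : (x : ℂ) * conj (x : ℂ) = N := by
    exact (congrArg (fun z : 𝓞 K ↦ (z : ℂ)) hN).trans (by simp)
  have hre : 2 * (x : ℂ).re = P := by
    rw [Complex.add_conj] at hPc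
    exact_mod_cast hPc
  have hnormSq : Complex.normSq (x : ℂ) = N := by
    rw [Complex.mul_conj] at hNc
    exact_mod_cast hNc
  have : (P : ℝ) ^ 2 ≤ 4 * N := by
    rw [← hre, ← hnormSq, Complex.normSq_apply]
    nlinarith [sq_nonneg (x : ℂ).im]
  exact_mod_cast this

end ComplexQuadraticField

section QuadField

open ComplexConjugate

variable {D : ℤ}

theorem intCast_cpow_half_sq : ((D : ℂ) ^ ((1 : ℂ) / 2)) ^ 2 = D := by
  rw [one_div, Complex.cpow_ofNat_inv_pow]

theorem exists_conj_eq_of_mem_quadField (hD : D < 0) {x : ℂ} (hx : x ∈ quadField D) :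
    ∃ p q : ℚ, x = p + q * (D : ℂ) ^ ((1 : ℂ) / 2) ∧ conj x = p - q * (D : ℂ) ^ ((1 : ℂ) / 2) := by
  obtain ⟨p, q, rfl⟩ := exists_eq_add_mul_of_mem_adjoin_simple (c := (D : ℚ))
    (by rw [intCast_cpow_half_sq, map_intCast]) hx
  refine ⟨p, q, rfl, ?_⟩
  rw [map_add, map_mul, conj_eq_neg_of_sq_eq_intCast hD intCast_cpow_half_sq]
  simp [sub_eq_add_neg]

theorem conj_mem_quadField (hD : D < 0) (x : ℂ) (hx : x ∈ quadField D) :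
    conj x ∈ quadField D := by
  obtain ⟨p, q, -, hconj⟩ := exists_conj_eq_of_mem_quadField hD hx
  rw [hconj]
  have hp (p : ℚ) : (p : ℂ) ∈ quadField D := by simp
  exact sub_mem (hp p) (mul_mem (hp q) (mem_adjoin_simple_self ℚ _))

theorem exists_eq_ratCast_of_mem_quadField_of_conj_eq (hD : D < 0) (x : ℂ)
    (hx : x ∈ quadField D) (hreal : conj x = x) : ∃ q : ℚ, x = q := by
  obtain ⟨p, q, hx, hconj⟩ := exists_conj_eq_of_mem_quadField hD hx
  exact ⟨p, by linear_combination (hx + hconj - hreal) / 2⟩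

theorem exists_ringOfIntegers_sq_eq (c : ℤ) : ∃ δ : 𝓞 (quadField (4 * c)), δ ^ 2 = c := by
  let r : quadField (4 * c) := ⟨((4 * c : ℤ) : ℂ) ^ ((1 : ℂ) / 2), mem_adjoin_simple_self ℚ _⟩
  have hr : r ^ 2 = (4 * c : ℤ) := Subtype.ext intCast_cpow_half_sq
  have hsq : (r / 2) ^ 2 = (c : quadField (4 * c)) := by
    rw [div_pow, hr]
    push_cast
    ring
  have hint : IsIntegral ℤ (r / 2) := .of_pow two_pos (hsq ▸ isIntegral_intCast c)
  exact ⟨⟨r / 2, hint⟩, RingOfIntegers.ext (hsq.trans (by simp))⟩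

instance numberField_quadField : NumberField (quadField D) where
  to_charZero := inferInstance
  to_finiteDimensional := adjoin.finiteDimensional <| .of_pow two_pos <| by
    rw [intCast_cpow_half_sq]
    exact isIntegral_intCast D

end QuadField

theorem stmt_16_general {a : ℤ} {n : ℕ} (hn : Odd n) (ha4 : 4 ∣ a - 1) (ha : 1 < a) :
    n ∣ quadClassNumber (1 - a ^ n) := by
  obtain ⟨c, hc⟩ : 4 ∣ 1 - a ^ n := dvd_sub_comm.1 (ha4.trans (sub_one_dvd_pow_sub_one a n))
  have hc0 : c < 0 := by linarith [one_lt_pow₀ ha hn.pos.ne']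
  have hD : 4 * c < 0 := by omega
  rw [hc]
  let := conjStarRing (conj_mem_quadField hD)
  have := isImaginaryQuadratic_ringOfIntegers (conj_mem_quadField hD)
    (exists_eq_ratCast_of_mem_quadField_of_conj_eq hD)
  obtain ⟨δ, hδ⟩ := exists_ringOfIntegers_sq_eq c
  have hδconj : star δ = -δ := RingOfIntegers.ext (Subtype.ext (conj_eq_neg_of_sq_eq_intCast hc0
    ((congrArg (fun z : 𝓞 (quadField (4 * c)) ↦ (z : ℂ)) hδ).trans (by simp))))
  refine IsImaginaryQuadratic.dvd_card_classGroup hn ha4 ha hδconj ?_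
  rw [hδ]
  exact_mod_cast hc.symm

theorem stmt_16 (k n : ℕ) (hk : 3 ≤ k) (hko : Odd k) (hn : 3 ≤ n) (hno : Odd n)
    (d a : ℤ) (hd : d = (1 - 2 * (k : ℤ) ^ n) ^ n) (ha : a = 2 * (k : ℤ) ^ n - 1) :
    d + 1 = 1 - a ^ n ∧ 53 ≤ a ∧ n ∣ quadClassNumber (d + 1) := by
  have hda : d + 1 = 1 - a ^ n := by
    rw [hd, ← neg_sub, ← ha, hno.neg_pow]
    ring
  have ha53 : 53 ≤ a := by
    have : (3 : ℤ) ^ 3 ≤ k ^ n := calc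
      (3 : ℤ) ^ 3 ≤ 3 ^ n := pow_le_pow_right₀ (by norm_num) hn
      _ ≤ k ^ n := by gcongr; exact_mod_cast hk
    omega
  have ha4 : 4 ∣ a - 1 := by
    obtain ⟨q, hq⟩ : Odd ((k : ℤ) ^ n) := (mod_cast hko : Odd (k : ℤ)).pow
    omega
  exact ⟨hda, ha53, hda ▸ stmt_16_general hno ha4 (by omega)⟩
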